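/- Let ψ : [0,1] → ℝ^k be totally non-planar and C^{m+1}, and let B ⊆ A_k^k be compact. Then for every ε > 0 there exist a constant C > 0 and, for every a ∈ B, positive measures τ_{1,a} and τ_{2,a} on ℝ^k such that: (1) (Ψ_a)_*λ_{[0,1]^k} = τ_{1,a} + τ_{2,a}; (2) τ_{2,a}(ℝ^k) < ε; (3) τ_{1,a} = g_a·λ_{ℝ^k} for some C^m function g_a : ℝ^k → ℝ; (4) ‖g_a‖_{C^m} < C. -/

import Mathlib

open MeasureTheory

/-- The derivative of a curve `ψ : [0,1] → ℝ^k` (derivative within `[0,1]`). -/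
noncomputable def curveDeriv (k : ℕ) (ψ : ℝ → (Fin k → ℝ)) (s : ℝ) : Fin k → ℝ :=
  derivWithin ψ (Set.Icc 0 1) s

/-- A function `ψ : [0,1] → ℝ^k` is totally non-planar if it is `C¹` and for every
nonzero `v ∈ ℝ^k` the set `{s ∈ [0,1] : ψ'(s)·v = 0}` has Lebesgue measure zero. -/
def TotallyNonPlanar (k : ℕ) (ψ : ℝ → (Fin k → ℝ)) : Prop :=
  ContDiffOn ℝ 1 ψ (Set.Icc 0 1) ∧
    ∀ v : Fin k → ℝ, v ≠ 0 →
      volume {s : ℝ | s ∈ Set.Icc (0:ℝ) 1 ∧ ∑ i, curveDeriv k ψ s i * v i = 0} = 0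

/-- `A_k`, the subgroup of diagonal matrices in `SL(k,ℝ)`. -/
def Ak (k : ℕ) : Type := {a : Matrix (Fin k) (Fin k) ℝ // a.IsDiag ∧ a.det = 1}

noncomputable instance (k : ℕ) : TopologicalSpace (Ak k) :=
  inferInstanceAs (TopologicalSpace {a : Matrix (Fin k) (Fin k) ℝ // a.IsDiag ∧ a.det = 1})

/-- `Ψ_a(x₁,…,x_k) = Σᵢ aᵢ ψ(xᵢ)`. -/
noncomputable def PsiMap (k : ℕ) (ψ : ℝ → (Fin k → ℝ)) (a : Fin k → Ak k) (x : Fin k → ℝ) :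
    Fin k → ℝ :=
  ∑ i, (a i).val.mulVec (ψ (x i))

/-!
The Jacobian of `x ↦ ∑ aᵢ ψ(xᵢ)` is the determinant of the vectors `aᵢ ψ'(xᵢ)`. Total non-planarity
says that `aᵢ ψ'(s)` almost surely avoids any given hyperplane, so by Fubini these vectors are
linearly independent for almost every `x`.

Fix `a₀`. The regular points of `Ψ_{a₀}` contain a compact set `K` whose complement in the cube has
measure less than `ε`, and for all `a` in a compact neighbourhood `N` of `a₀` every point of `K`
stays regular for `Ψ_a`. Cut the measure off by a function of `(a, x)` equal to `1` on `N × K`: the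
part cut away has mass less than `ε`. For the other part, `(a, x) ↦ (a, Ψ_a(x))` is a local
diffeomorphism, so a partition of unity and the change of variables formula give a density `G(a, y)`
which is `C^m` and compactly supported in both variables together. Its derivatives are therefore
bounded uniformly in `a`, and compactness of `B` makes finitely many neighbourhoods `N` enough.
-/

open Set Topology
open scoped ContDiff ENNReal Manifold

section LinearIndependence

lemma exists_dual_linearIndependent_cons {R M : Type*} [Field R] [AddCommGroup M] [Module R M]
    {n : ℕ} {v : Fin n → M} (hv : LinearIndependent R v)
    (hn : n < Module.finrank R M) :
    ∃ f : Module.Dual R M, f ≠ 0 ∧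
      ∀ w, f w ≠ 0 → LinearIndependent R (Fin.cons w v : Fin (n + 1) → M) := by
  have hspan : Submodule.span R (range v) < ⊤ := by
    refine lt_top_iff_ne_top.2 fun htop => hn.ne ?_
    rw [← Fintype.card_fin n, ← finrank_span_eq_card hv, htop, finrank_top]
  obtain ⟨f, hf, hker⟩ := Submodule.exists_le_ker_of_lt_top _ hspan
  exact ⟨f, hf, fun w hw => linearIndependent_finCons.2 ⟨hv, fun hmem => hw (hker hmem)⟩⟩

variable {S V : Type*} [MeasurableSpace S] [NormedAddCommGroup V] [NormedSpace ℝ V]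
  [FiniteDimensional ℝ V] [MeasurableSpace V] [BorelSpace V]

lemma ae_linearIndependent_pi {n : ℕ} (hn : n ≤ Module.finrank ℝ V)
    (μ : Fin n → Measure S) [∀ i, SigmaFinite (μ i)] {φ : Fin n → S → V}
    (hφ : ∀ i, Measurable (φ i))
    (hnull : ∀ i, ∀ f : Module.Dual ℝ V, f ≠ 0 → ∀ᵐ s ∂μ i, f (φ i s) ≠ 0) :
    ∀ᵐ x ∂Measure.pi μ, LinearIndependent ℝ fun i => φ i (x i) := by
  induction n with
  | zero => exact .of_forall fun x => linearIndependent_empty_type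
  | succ n ih =>
    let v (z : S × (Fin n → S)) : Fin (n + 1) → V :=
      Fin.cons (φ 0 z.1) fun i => φ i.succ (z.2 i)
    have hv : Measurable v := by
      refine measurable_pi_lambda _ (Fin.cases ?_ fun i => ?_)
      · exact (hφ 0).comp measurable_fst
      · exact (hφ i.succ).comp ((measurable_pi_apply i).comp measurable_snd)
    have hmeas : MeasurableSet {z | LinearIndependent ℝ (v z)} :=
      hv isOpen_setOfPred_linearIndependent.measurableSet
    have hprod : ∀ᵐ z ∂(μ 0).prod (Measure.pi fun i => μ (Fin.succ i)),
        LinearIndependent ℝ (v z) := by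
      rw [Measure.ae_prod_iff_ae_ae hmeas,
        Measure.ae_ae_comm (p := fun s y => LinearIndependent ℝ (v (s, y))) hmeas]
      filter_upwards [ih (by omega) _ (fun i => hφ i.succ) fun i => hnull i.succ] with y hy
      obtain ⟨f, hf, hcons⟩ := exists_dual_linearIndependent_cons hy hn
      filter_upwards [hnull 0 f hf] with s hs using hcons _ hs
    filter_upwards [(measurePreserving_piFinSuccAbove μ 0).quasiMeasurePreserving.ae hprod]
      with x hx
    convert hx using 1
    exact funext (Fin.cases rfl fun i => rfl)

end LinearIndependence

section ChangeOfVariables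

lemma restrict_withDensity_of_support_subset {α : Type*} [MeasurableSpace α] {μ : Measure α}
    {s : Set α} (hs : MeasurableSet s) {ρ : α → ℝ≥0∞} (hρ : Function.support ρ ⊆ s) :
    (μ.restrict s).withDensity ρ = μ.withDensity ρ := by
  rw [← withDensity_indicator hs, indicator_eq_self.2 hρ]

variable {E : Type*} [NormedAddCommGroup E] [NormedSpace ℝ E] [FiniteDimensional ℝ E]
  [MeasurableSpace E] [BorelSpace E]

lemma map_withDensity_abs_det_fderiv_mul (μ : Measure E) [μ.IsAddHaarMeasure] {s : Set E}
    (hs : MeasurableSet s) {f : E → E} {f' : E → E →L[ℝ] E}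
    (hf' : ∀ x ∈ s, HasFDerivWithinAt f (f' x) s x) (hf : InjOn f s) (σ : E → ℝ≥0∞) :
    ((μ.restrict s).withDensity fun x => ENNReal.ofReal |(f' x).det| * σ (f x)).map f =
      (μ.restrict (f '' s)).withDensity σ := by
  have hfm : AEMeasurable f (μ.restrict s) :=
    ContinuousOn.aemeasurable (fun x hx => (hf' x hx).continuousWithinAt) hs
  ext T hT
  rw [Measure.map_apply_of_aemeasurable (hfm.mono_ac (withDensity_absolutelyContinuous _ _)) hT,
    withDensity_apply', withDensity_apply _ hT, ← lintegral_indicator₀ (hfm.nullMeasurable hT),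
    ← lintegral_indicator hT, lintegral_image_eq_lintegral_abs_det_fderiv_mul μ hs hf' hf]
  refine lintegral_congr fun x => ?_
  by_cases hx : f x ∈ T <;> simp [hx]

end ChangeOfVariables

section Smoothness

lemma isCompact_image_tsupport {X Y : Type*} [TopologicalSpace X] [TopologicalSpace Y]
    {e : OpenPartialHomeomorph X Y} {χ : X → ℝ} (hχ : HasCompactSupport χ)
    (hχe : tsupport χ ⊆ e.source) : IsCompact (e '' tsupport χ) :=
  hχ.isCompact.image_of_continuousOn (e.continuousOn.mono hχe)

lemma exists_smoothPartitionOfUnity_hasCompactSupport {X : Type*} [NormedAddCommGroup X]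
    [NormedSpace ℝ X] [FiniteDimensional ℝ X] {ι : Type*} {K : Set X} (hK : IsCompact K)
    {U : ι → Set X} (hU : ∀ i, IsOpen (U i)) (hKU : K ⊆ ⋃ i, U i) :
    ∃ (t : Finset ι) (f : SmoothPartitionOfUnity t 𝓘(ℝ, X) X K),
      f.IsSubordinate (fun i => U i) ∧ ∀ i, HasCompactSupport (f i) := by
  obtain ⟨t, ht⟩ := hK.elim_finite_subcover U hU hKU
  obtain ⟨r, hr⟩ := hK.isBounded.subset_ball 0
  obtain ⟨f, hf⟩ := SmoothPartitionOfUnity.exists_isSubordinate 𝓘(ℝ, X) hK.isClosed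
    (fun i : t => U i ∩ Metric.ball 0 r) (fun i => (hU i).inter Metric.isOpen_ball) fun z hz => by
      obtain ⟨i, hi, hzi⟩ := mem_iUnion₂.1 (ht hz)
      exact mem_iUnion.2 ⟨⟨i, hi⟩, hzi, hr hz⟩
  refine ⟨t, f, fun i => (hf i).trans inter_subset_left, fun i => ?_⟩
  exact Metric.isCompact_of_isClosed_isBounded (isClosed_tsupport _)
    (Metric.isBounded_ball.subset ((hf i).trans inter_subset_right))

variable {𝕜 : Type*} [NontriviallyNormedField 𝕜]

lemma contDiff_clm_det [CompleteSpace 𝕜] {X : Type*} [NormedAddCommGroup X] [NormedSpace 𝕜 X]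
    [FiniteDimensional 𝕜 X] {n : ℕ∞ω} : ContDiff 𝕜 n fun f : X →L[𝕜] X => f.det := by
  let b := Module.finBasis 𝕜 X
  have hentry (i j) : ContDiff 𝕜 n fun f : X →L[𝕜] X => LinearMap.toMatrix b b f i j :=
    (LinearMap.toContinuousLinearMap ((Matrix.entryLinearMap 𝕜 𝕜 i j).comp
      ((LinearMap.toMatrix b b).toLinearMap.comp (ContinuousLinearMap.coeLM 𝕜)))).contDiff
  have hdet (f : X →L[𝕜] X) : f.det = (LinearMap.toMatrix b b f).det :=
    (LinearMap.det_toMatrix b f).symm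
  simp only [hdet, Matrix.det_apply]
  exact ContDiff.sum fun σ _ => (contDiff_prod fun i _ => hentry _ _).const_smul _

variable {Y Z W : Type*} [NormedAddCommGroup Y] [NormedSpace 𝕜 Y] [NormedAddCommGroup Z]
  [NormedSpace 𝕜 Z] [NormedAddCommGroup W] [NormedSpace 𝕜 W]

lemma norm_iteratedFDeriv_prodMk_le {m i : ℕ} {G : Y × Z → W} (hG : ContDiff 𝕜 m G)
    (hi : i ≤ m) (a : Y) (y : Z) :
    ‖iteratedFDeriv 𝕜 i (fun y => G (a, y)) y‖ ≤ ‖iteratedFDeriv 𝕜 i G (a, y)‖ := by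
  have hslice : (fun y => G (a, y)) =
      (fun z => G ((a, 0) + z)) ∘ ContinuousLinearMap.inr 𝕜 Y Z := by
    ext y; simp
  have hshift : ContDiff 𝕜 m fun z => G ((a, 0) + z) := hG.comp (contDiff_const.add contDiff_id)
  rw [hslice, ContinuousLinearMap.iteratedFDeriv_comp_right _ hshift y (by exact_mod_cast hi),
    iteratedFDeriv_comp_add_left]
  refine (ContinuousMultilinearMap.norm_compContinuousLinearMap_le _ _).trans ?_
  simp only [ContinuousLinearMap.inr_apply, Prod.mk_add_mk, add_zero, zero_add]
  refine mul_le_of_le_one_right (norm_nonneg _) (Finset.prod_le_one (fun _ _ => norm_nonneg _) ?_)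
  exact fun _ _ => ContinuousLinearMap.norm_inr_le_one 𝕜 Y Z

lemma exists_forall_norm_iteratedFDeriv_lt {m : ℕ} {G : Y → W} (hG : ContDiff 𝕜 m G)
    (hc : HasCompactSupport G) :
    ∃ C > 0, ∀ i ≤ m, ∀ z, ‖iteratedFDeriv 𝕜 i G z‖ < C := by
  have hbound (i : Fin (m + 1)) : ∃ C, ∀ z, ‖iteratedFDeriv 𝕜 i G z‖ ≤ C :=
    (hc.iteratedFDeriv (𝕜 := 𝕜) i).exists_bound_of_continuous
      (hG.continuous_iteratedFDeriv (by exact_mod_cast Nat.lt_succ_iff.1 i.2))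
  choose C hC using hbound
  refine ⟨∑ i, |C i| + 1, by positivity, fun i hi z => ?_⟩
  calc ‖iteratedFDeriv 𝕜 i G z‖ ≤ |C ⟨i, Nat.lt_succ_iff.2 hi⟩| :=
        (hC ⟨i, Nat.lt_succ_iff.2 hi⟩ z).trans (le_abs_self _)
    _ ≤ ∑ i, |C i| := Finset.single_le_sum (f := fun i => |C i|) (fun _ _ => abs_nonneg _)
        (Finset.mem_univ _)
    _ < _ := lt_add_one _

end Smoothness

section ParametrizedMaps

variable {P E : Type*} [NormedAddCommGroup P] [NormedSpace ℝ P] [NormedAddCommGroup E]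
  [NormedSpace ℝ E] {F : P × E → E} {U : Set E} {m : ℕ}

/-- The partial derivative of `F : P × E → E` in the second variable, `P` being a space of
parameters. -/
noncomputable def fiberFDeriv (F : P × E → E) (z : P × E) : E →L[ℝ] E :=
  fderiv ℝ F z ∘L .inr ℝ P E

/-- The Jacobian determinant at `x` of the map `F (a, ·)`, as a function of `(a, x)`. -/
noncomputable def fiberJacobian (F : P × E → E) (z : P × E) : ℝ :=
  (fiberFDeriv F z).det

/-- The points `(a, x)` with `x ∈ U` at which the Jacobian of `F (a, ·)` does not vanish. -/
def regularLocus (F : P × E → E) (U : Set E) : Set (P × E) :=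
  {z | z.2 ∈ U ∧ fiberJacobian F z ≠ 0}

lemma hasFDerivAt_fiber {a : P} {x : E} (hF : DifferentiableAt ℝ F (a, x)) :
    HasFDerivAt (fun x => F (a, x)) (fiberFDeriv F (a, x)) x :=
  HasFDerivAt.comp x (g := F) hF.hasFDerivAt (hasFDerivAt_prodMk_right a x)

lemma contDiffAt_of_contDiffOn_univ_prod {n : ℕ∞ω} (hU : IsOpen U)
    (hF : ContDiffOn ℝ n F (univ ×ˢ U)) {z : P × E} (hz : z.2 ∈ U) : ContDiffAt ℝ n F z :=
  hF.contDiffAt ((isOpen_univ.prod hU).mem_nhds ⟨mem_univ _, hz⟩)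

/-- A local inverse, of class `C^m`, of `(a, x) ↦ (a, F (a, x))` on part of the regular locus.
It inverts all the maps `F (a, ·)` simultaneously. -/
structure IsFiberChart (m : ℕ) (F : P × E → E) (U : Set E)
    (e : OpenPartialHomeomorph (P × E) (P × E)) : Prop where
  apply_eq : ∀ z, e z = (z.1, F z)
  source_subset : e.source ⊆ regularLocus F U
  contDiffOn_symm : ContDiffOn ℝ m e.symm e.target

/-- The density of the image under `F (a, ·)` of the measure with density `χ (a, ·)`, as a function
of `(a, y)`, when `χ` is supported in the source of the fiber chart `e`. -/
noncomputable def chartDensity (F : P × E → E) (e : OpenPartialHomeomorph (P × E) (P × E))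
    (χ : P × E → ℝ) : P × E → ℝ :=
  e.target.indicator fun w => χ (e.symm w) / |fiberJacobian F (e.symm w)|

variable {e : OpenPartialHomeomorph (P × E) (P × E)} {χ : P × E → ℝ}

lemma chartDensity_apply (he : IsFiberChart m F U e) {z : P × E} (hz : z ∈ e.source) :
    chartDensity F e χ (z.1, F z) = χ z / |fiberJacobian F z| := by
  rw [← he.apply_eq, chartDensity, indicator_of_mem (e.map_source hz), e.left_inv hz]

lemma chartDensity_nonneg (hχ : ∀ z, 0 ≤ χ z) (w : P × E) : 0 ≤ chartDensity F e χ w :=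
  indicator_nonneg (fun _ _ => div_nonneg (hχ _) (abs_nonneg _)) w

lemma support_chartDensity_subset : Function.support (chartDensity F e χ) ⊆ e '' tsupport χ := by
  intro w hw
  obtain ⟨hwe, hw⟩ := indicator_apply_ne_zero.1 hw
  exact ⟨e.symm w, subset_tsupport _ (div_ne_zero_iff.1 hw).1, e.right_inv hwe⟩

lemma support_chartDensity_prodMk_subset (he : IsFiberChart m F U e) (hχe : tsupport χ ⊆ e.source)
    (a : P) : Function.support (fun y => chartDensity F e χ (a, y)) ⊆
      (fun x => F (a, x)) '' {x | (a, x) ∈ e.source} := by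
  intro y hy
  obtain ⟨⟨b, x⟩, hz, hzy⟩ := support_chartDensity_subset hy
  rw [he.apply_eq] at hzy
  obtain ⟨rfl, rfl⟩ := Prod.mk.inj hzy
  exact ⟨x, hχe hz, rfl⟩

lemma hasCompactSupport_chartDensity (hχ : HasCompactSupport χ) (hχe : tsupport χ ⊆ e.source) :
    HasCompactSupport (chartDensity F e χ) :=
  .of_support_subset_isCompact (isCompact_image_tsupport hχ hχe) support_chartDensity_subset

variable [FiniteDimensional ℝ E]

lemma contDiffAt_fiberJacobian {n : ℕ∞ω} {z : P × E} (hF : ContDiffAt ℝ (n + 1) F z) :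
    ContDiffAt ℝ n (fiberJacobian F) z :=
  contDiff_clm_det.contDiffAt.comp z (hF.fderiv_right_succ.clm_comp contDiffAt_const)

lemma isOpen_regularLocus (hU : IsOpen U) (hF : ContDiffOn ℝ 1 F (univ ×ˢ U)) :
    IsOpen (regularLocus F U) := by
  refine isOpen_iff_mem_nhds.2 fun z ⟨hzU, hJ⟩ => ?_
  have hcont : ContinuousAt (fiberJacobian F) z :=
    (contDiffAt_fiberJacobian (n := 0)
      (by simpa using contDiffAt_of_contDiffOn_univ_prod hU hF hzU)).continuousAt
  exact Filter.inter_mem ((hU.preimage continuous_snd).mem_nhds hzU) (hcont.eventually_ne hJ)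

lemma exists_equiv_hasFDerivAt_prodMk {z : P × E} (hF : DifferentiableAt ℝ F z)
    (hJ : fiberJacobian F z ≠ 0) :
    ∃ L : (P × E) ≃L[ℝ] P × E, HasFDerivAt (fun z => (z.1, F z)) (L : P × E →L[ℝ] P × E) z := by
  refine ⟨(ContinuousLinearEquiv.refl ℝ P).skewProd
    ((fiberFDeriv F z).toContinuousLinearEquivOfDetNeZero hJ) (fderiv ℝ F z ∘L .inl ℝ P E), ?_⟩
  refine (hasFDerivAt_fst.prodMk hF.hasFDerivAt).congr_fderiv ?_
  ext w <;> simp [fiberFDeriv, ← Prod.zero_eq_mk]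

lemma exists_isFiberChart [CompleteSpace P] (hU : IsOpen U)
    (hF : ContDiffOn ℝ (m + 1) F (univ ×ˢ U)) {z₀ : P × E} (hz₀ : z₀ ∈ regularLocus F U) :
    ∃ e, IsFiberChart m F U e ∧ z₀ ∈ e.source := by
  have hgraph {z : P × E} (hz : z ∈ regularLocus F U) :
      ContDiffAt ℝ (m + 1) (fun z => (z.1, F z)) z :=
    contDiffAt_fst.prodMk (contDiffAt_of_contDiffOn_univ_prod hU hF hz.1)
  have hderiv {z : P × E} (hz : z ∈ regularLocus F U) :=
    exists_equiv_hasFDerivAt_prodMk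
      ((contDiffAt_of_contDiffOn_univ_prod hU hF hz.1).differentiableAt (by simp)) hz.2
  obtain ⟨L, hL⟩ := hderiv hz₀
  let e := ((hgraph hz₀).toOpenPartialHomeomorph _ hL (by simp)).restrOpen (regularLocus F U)
    (isOpen_regularLocus hU (hF.of_le (by simp)))
  have hsource : e.source ⊆ regularLocus F U := inter_subset_right
  refine ⟨e, ⟨fun z => rfl, hsource, fun w hw => ?_⟩,
    (hgraph hz₀).mem_toOpenPartialHomeomorph_source hL (by simp), hz₀⟩
  have hreg := hsource (e.map_target hw)
  obtain ⟨L', hL'⟩ := hderiv hreg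
  exact ((e.contDiffAt_symm hw hL' (hgraph hreg)).of_le (by simp)).contDiffWithinAt

lemma contDiff_chartDensity (he : IsFiberChart m F U e) (hU : IsOpen U)
    (hF : ContDiffOn ℝ (m + 1) F (univ ×ˢ U)) (hχm : ContDiff ℝ m χ)
    (hχ : HasCompactSupport χ) (hχe : tsupport χ ⊆ e.source) :
    ContDiff ℝ m (chartDensity F e χ) := by
  have htarget : ContDiffOn ℝ m (chartDensity F e χ) e.target := by
    refine ContDiffOn.congr (fun w hw => ?_) fun w hw => indicator_of_mem hw _
    obtain ⟨hsU, hJ⟩ := he.source_subset (e.map_target hw)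
    have hJm : ContDiffAt ℝ m (fun z => |fiberJacobian F z|) (e.symm w) :=
      (contDiffAt_fiberJacobian (contDiffAt_of_contDiffOn_univ_prod hU hF hsU)).abs hJ
    exact (hχm.contDiffAt.div hJm (abs_ne_zero.2 hJ)).comp_contDiffWithinAt w
      (he.contDiffOn_symm w hw)
  have hcompl : ContDiffOn ℝ m (chartDensity F e χ) (e '' tsupport χ)ᶜ :=
    contDiffOn_const.congr fun w hw =>
      Function.notMem_support.1 fun h => hw (support_chartDensity_subset h)
  refine contDiff_of_contDiffOn_union_of_isOpen htarget hcompl ?_ e.open_target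
    (isCompact_image_tsupport hχ hχe).isClosed.isOpen_compl
  rw [← compl_subset_iff_union, compl_subset_compl]
  exact (image_mono hχe).trans e.image_source_eq_target.subset

end ParametrizedMaps

section SliceMeasure

variable {P E : Type*} [MeasurableSpace E] {ν : Measure E} {χ : P × E → ℝ} {a : P}

/-- The measure with density `χ (a, ·)` with respect to `ν`, for `χ ≥ 0`: the slice at the
parameter `a` of a density on `P × E`. -/
noncomputable def sliceMeasure (ν : Measure E) (χ : P × E → ℝ) (a : P) : Measure E :=
  ν.withDensity fun x => ENNReal.ofReal (χ (a, x))

lemma sliceMeasure_add_one_sub (hm : Measurable fun x => χ (a, x)) (h₀ : ∀ z, 0 ≤ χ z)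
    (h₁ : ∀ z, χ z ≤ 1) : sliceMeasure ν χ a + sliceMeasure ν (1 - χ) a = ν := by
  rw [sliceMeasure, sliceMeasure, ← withDensity_add_left hm.ennreal_ofReal]
  have hone (x : E) : ENNReal.ofReal (χ (a, x)) + ENNReal.ofReal (1 - χ (a, x)) = 1 := by
    rw [← ENNReal.ofReal_add (h₀ _) (sub_nonneg.2 (h₁ _)), add_sub_cancel, ENNReal.ofReal_one]
  exact (congrArg ν.withDensity (funext hone)).trans withDensity_one

lemma sliceMeasure_one_sub_univ_le {K : Set E} (hK : MeasurableSet K) (h₀ : ∀ z, 0 ≤ χ z)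
    (h₁ : ∀ x ∈ K, χ (a, x) = 1) : sliceMeasure ν (1 - χ) a univ ≤ ν Kᶜ := by
  rw [sliceMeasure, withDensity_apply _ .univ, Measure.restrict_univ, ← lintegral_indicator_one
    hK.compl]
  refine lintegral_mono fun x => ?_
  by_cases hx : x ∈ K
  · simp [hx, h₁]
  · simp [hx, h₀]

lemma sliceMeasure_sum {ι : Type*} [Fintype ι] {χ : ι → P × E → ℝ}
    (hm : ∀ i, Measurable fun x => χ i (a, x)) (h₀ : ∀ i z, 0 ≤ χ i z) :
    sliceMeasure ν (fun z => ∑ i, χ i z) a = ∑ i, sliceMeasure ν (χ i) a := by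
  simp only [sliceMeasure]
  rw [← Measure.sum_fintype, ← withDensity_tsum fun i => (hm i).ennreal_ofReal]
  congr 1 with x
  rw [tsum_fintype, ENNReal.ofReal_sum_of_nonneg fun i _ => h₀ i _, Finset.sum_apply]

end SliceMeasure

section Pushforward

lemma aemeasurable_comp_prodMk_restrict {P X Y : Type*} [TopologicalSpace P] [TopologicalSpace X]
    [MeasurableSpace X] [OpensMeasurableSpace X] [TopologicalSpace Y]
    [TopologicalSpace.PseudoMetrizableSpace Y] [MeasurableSpace Y] [BorelSpace Y] {μ : Measure X}
    {F : P × X → Y} {U : Set X} (hU : MeasurableSet U) (hF : ContinuousOn F (univ ×ˢ U)) (a : P) :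
    AEMeasurable (fun x => F (a, x)) (μ.restrict U) :=
  (hF.comp (by fun_prop) fun _ hx => ⟨mem_univ _, hx⟩).aemeasurable hU

variable {P E : Type*} [NormedAddCommGroup P] [NormedSpace ℝ P] [NormedAddCommGroup E]
  [NormedSpace ℝ E] [MeasurableSpace E] [BorelSpace E] {F : P × E → E} {U : Set E} {m : ℕ}
  {μ : Measure E}

/-- For every parameter `a`, the map `F (a, ·)` sends the measure with density `χ (a, ·)` on `U` to
the measure with density `G (a, ·)`, where `G` is compactly supported and of class `C^m` jointly in
both variables. -/
structure HasSmoothPushforward (m : ℕ) (μ : Measure E) (F : P × E → E) (U : Set E)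
    (χ G : P × E → ℝ) : Prop where
  contDiff : ContDiff ℝ m G
  hasCompactSupport : HasCompactSupport G
  nonneg : ∀ w, 0 ≤ G w
  map_eq : ∀ a, (sliceMeasure (μ.restrict U) χ a).map (fun x => F (a, x)) = sliceMeasure μ G a

lemma HasSmoothPushforward.sum {ι : Type*} [Fintype ι] {χ G : ι → P × E → ℝ} (hU : MeasurableSet U)
    (hF : ContinuousOn F (univ ×ˢ U)) (hχ : ∀ i, Continuous (χ i)) (hχ₀ : ∀ i z, 0 ≤ χ i z)
    (h : ∀ i, HasSmoothPushforward m μ F U (χ i) (G i)) :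
    HasSmoothPushforward m μ F U (fun z => ∑ i, χ i z) fun w => ∑ i, G i w where
  contDiff := .sum fun i _ => (h i).contDiff
  hasCompactSupport := by
    rw [← Finset.sum_fn]
    exact Finset.sum_induction _ _ (fun _ _ => .add) .zero fun i _ => (h i).hasCompactSupport
  nonneg w := Finset.sum_nonneg fun i _ => (h i).nonneg w
  map_eq a := by
    have hG (i) : Measurable fun y => G i (a, y) :=
      ((h i).contDiff.continuous.comp (by fun_prop)).measurable
    have hχm (i) : Measurable fun y => χ i (a, y) := ((hχ i).comp (by fun_prop)).measurable
    have hac : ∑ i, sliceMeasure (μ.restrict U) (χ i) a ≪ μ.restrict U := by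
      rw [← sliceMeasure_sum hχm hχ₀]
      exact withDensity_absolutelyContinuous _ _
    rw [sliceMeasure_sum hχm hχ₀, sliceMeasure_sum hG fun i => (h i).nonneg,
      Measure.map_finset_sum' ((aemeasurable_comp_prodMk_restrict hU hF a).mono_ac hac)]
    exact Finset.sum_congr rfl fun i _ => (h i).map_eq a

variable [FiniteDimensional ℝ E] [μ.IsAddHaarMeasure]
  {e : OpenPartialHomeomorph (P × E) (P × E)} {χ : P × E → ℝ}

lemma map_sliceMeasure_eq_sliceMeasure_chartDensity (he : IsFiberChart m F U e) (hU : IsOpen U)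
    (hF : DifferentiableOn ℝ F (univ ×ˢ U)) (hχe : tsupport χ ⊆ e.source) (a : P) :
    (sliceMeasure (μ.restrict U) χ a).map (fun x => F (a, x)) =
      sliceMeasure μ (chartDensity F e χ) a := by
  let S : Set E := {x | (a, x) ∈ e.source}
  have hS : MeasurableSet S := (e.open_source.preimage (by fun_prop)).measurableSet
  have hSU : S ⊆ U := fun x hx => (he.source_subset hx).1
  have hderiv (x) (hx : x ∈ S) :
      HasFDerivWithinAt (fun x => F (a, x)) (fiberFDeriv F (a, x)) S x :=
    (hasFDerivAt_fiber (hF.differentiableAt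
      ((isOpen_univ.prod hU).mem_nhds ⟨mem_univ a, hSU hx⟩))).hasFDerivWithinAt
  have hinj : InjOn (fun x => F (a, x)) S := fun x hx y hy hxy =>
    congrArg Prod.snd (e.injOn hx hy (by simp only [he.apply_eq, hxy]))
  have hsource : Function.support (fun x => ENNReal.ofReal (χ (a, x))) ⊆ S :=
    (Function.support_comp_subset ENNReal.ofReal_zero _).trans fun x hx =>
      hχe (subset_tsupport _ hx)
  have htarget : Function.support (fun y => ENNReal.ofReal (chartDensity F e χ (a, y))) ⊆
      (fun x => F (a, x)) '' S :=
    (Function.support_comp_subset ENNReal.ofReal_zero _).trans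
      (support_chartDensity_prodMk_subset he hχe a)
  have hdensity : (fun x => ENNReal.ofReal (χ (a, x))) =ᵐ[μ.restrict S] fun x =>
      ENNReal.ofReal |(fiberFDeriv F (a, x)).det| *
        ENNReal.ofReal (chartDensity F e χ (a, F (a, x))) := by
    filter_upwards [ae_restrict_mem hS] with x hx
    have hJ := (he.source_subset hx).2
    rw [chartDensity_apply he hx, ← ENNReal.ofReal_mul (abs_nonneg _), ← fiberJacobian,
      mul_div_cancel₀ _ (abs_ne_zero.2 hJ)]
  rw [sliceMeasure, sliceMeasure, restrict_withDensity_of_support_subset hU.measurableSet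
    (hsource.trans hSU), ← restrict_withDensity_of_support_subset hS hsource,
    withDensity_congr_ae hdensity,
    map_withDensity_abs_det_fderiv_mul μ hS hderiv hinj
      fun y => ENNReal.ofReal (chartDensity F e χ (a, y)),
    restrict_withDensity_of_support_subset (measurable_image_of_fderivWithin hS hderiv hinj)
      htarget]

lemma hasSmoothPushforward_chartDensity (he : IsFiberChart m F U e) (hU : IsOpen U)
    (hF : ContDiffOn ℝ (m + 1) F (univ ×ˢ U)) (hχm : ContDiff ℝ m χ) (hχ : HasCompactSupport χ)
    (hχe : tsupport χ ⊆ e.source) (hχ₀ : ∀ z, 0 ≤ χ z) :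
    HasSmoothPushforward m μ F U χ (chartDensity F e χ) where
  contDiff := contDiff_chartDensity he hU hF hχm hχ hχe
  hasCompactSupport := hasCompactSupport_chartDensity hχ hχe
  nonneg := chartDensity_nonneg hχ₀
  map_eq := map_sliceMeasure_eq_sliceMeasure_chartDensity he hU
    (hF.differentiableOn (by simp)) hχe

lemma exists_hasSmoothPushforward [FiniteDimensional ℝ P] (hU : IsOpen U)
    (hF : ContDiffOn ℝ (m + 1) F (univ ×ˢ U)) {K : Set (P × E)} (hK : IsCompact K)
    (hKreg : K ⊆ regularLocus F U) :
    ∃ χ G : P × E → ℝ, Continuous χ ∧ (∀ z, 0 ≤ χ z) ∧ (∀ z, χ z ≤ 1) ∧ (∀ z ∈ K, χ z = 1) ∧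
      HasSmoothPushforward m μ F U χ G := by
  have := FiniteDimensional.complete ℝ P
  choose e he hze using fun z : K => exists_isFiberChart hU hF (hKreg z.2)
  obtain ⟨t, f, hf, hfc⟩ := exists_smoothPartitionOfUnity_hasCompactSupport hK
    (fun z => (e z).open_source) fun z hz => mem_iUnion.2 ⟨⟨z, hz⟩, hze _⟩
  have hfm (i) : ContDiff ℝ m (f i) := (f i).contMDiff.contDiff.of_le (mod_cast le_top)
  refine ⟨fun z => ∑ i, f i z, _, continuous_finsetSum _ fun i _ => (hfm i).continuous,
    fun z => ?_, fun z => ?_, fun z hz => ?_,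
    .sum hU.measurableSet hF.continuousOn (fun i => (hfm i).continuous) f.nonneg fun i =>
      hasSmoothPushforward_chartDensity (he i) hU hF (hfm i) (hfc i) (hf i) (f.nonneg i)⟩
  · exact Finset.sum_nonneg fun i _ => f.nonneg i z
  · exact (finsum_eq_sum_of_fintype _).symm.trans_le (f.sum_le_one z)
  · exact (finsum_eq_sum_of_fintype _).symm.trans (f.sum_eq_one hz)

end Pushforward

section SmoothUpTo

variable {P E : Type*} [NormedAddCommGroup P] [NormedSpace ℝ P] [NormedAddCommGroup E]
  [NormedSpace ℝ E] [MeasurableSpace E] {F : P × E → E} {U : Set E} {m : ℕ} {μ ρ : Measure E}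
  {ε C C' : ℝ}

/-- The measure `ρ` is the sum of a measure of mass less than `ε` and of a measure with a
nonnegative `C^m` density with respect to `μ` whose derivatives of order at most `m` are bounded by
`C`. -/
def IsSmoothUpTo (μ : Measure E) (m : ℕ) (ε C : ℝ) (ρ : Measure E) : Prop :=
  ∃ τ₁ τ₂ : Measure E, ρ = τ₁ + τ₂ ∧ τ₂ univ < ENNReal.ofReal ε ∧
    ∃ g : E → ℝ, ContDiff ℝ m g ∧ (∀ x, 0 ≤ g x) ∧
      τ₁ = μ.withDensity (fun x => ENNReal.ofReal (g x)) ∧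
      ∀ i ≤ m, ∀ x, ‖iteratedFDeriv ℝ i g x‖ < C

lemma IsSmoothUpTo.mono (h : IsSmoothUpTo μ m ε C ρ) (hC : C ≤ C') : IsSmoothUpTo μ m ε C' ρ := by
  obtain ⟨τ₁, τ₂, hρ, hε, g, hg, hg₀, hτ, hgC⟩ := h
  exact ⟨τ₁, τ₂, hρ, hε, g, hg, hg₀, hτ, fun i hi x => (hgC i hi x).trans_le hC⟩

variable [BorelSpace E]

lemma HasSmoothPushforward.isSmoothUpTo {χ G : P × E → ℝ} (h : HasSmoothPushforward m μ F U χ G)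
    {a : P} (hF : AEMeasurable (fun x => F (a, x)) (μ.restrict U)) (hχ : Continuous χ)
    (hχ₀ : ∀ z, 0 ≤ χ z) (hχ₁ : ∀ z, χ z ≤ 1) {K : Set E} (hK : MeasurableSet K)
    (hχK : ∀ x ∈ K, χ (a, x) = 1) (hKε : μ.restrict U Kᶜ < ENNReal.ofReal ε)
    (hC : ∀ i ≤ m, ∀ w, ‖iteratedFDeriv ℝ i G w‖ < C) :
    IsSmoothUpTo μ m ε C ((μ.restrict U).map fun x => F (a, x)) := by
  have hFχ (χ' : P × E → ℝ) :
      AEMeasurable (fun x => F (a, x)) (sliceMeasure (μ.restrict U) χ' a) :=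
    hF.mono_ac (withDensity_absolutelyContinuous _ _)
  refine ⟨sliceMeasure μ G a,
    (sliceMeasure (μ.restrict U) (1 - χ) a).map fun x => F (a, x), ?_, ?_,
    fun y => G (a, y), h.contDiff.comp (by fun_prop), fun y => h.nonneg _, rfl, fun i hi y =>
      (norm_iteratedFDeriv_prodMk_le h.contDiff hi a y).trans_lt (hC i hi _)⟩
  · rw [← h.map_eq, ← AEMeasurable.map_add₀ (hFχ _) (hFχ _),
      sliceMeasure_add_one_sub (hχ.comp (by fun_prop)).measurable hχ₀ hχ₁]
  · rw [Measure.map_apply_of_aemeasurable (hFχ _) .univ, preimage_univ]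
    exact (sliceMeasure_one_sub_univ_le hK hχ₀ hχK).trans_lt hKε

variable [FiniteDimensional ℝ P] [FiniteDimensional ℝ E]

lemma exists_isCompact_nhds_prod_subset_regularLocus (hU : IsOpen U) (hμU : μ U ≠ ⊤)
    (hF : ContDiffOn ℝ 1 F (univ ×ˢ U)) {a₀ : P}
    (hreg : ∀ᵐ x ∂μ.restrict U, fiberJacobian F (a₀, x) ≠ 0) (hε : 0 < ε) :
    ∃ N ∈ 𝓝 a₀, IsCompact N ∧ ∃ K, IsCompact K ∧ μ.restrict U Kᶜ < ENNReal.ofReal ε ∧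
      N ×ˢ K ⊆ regularLocus F U := by
  have := FiniteDimensional.proper_real P
  let R : Set E := {x | (a₀, x) ∈ regularLocus F U}
  have hopen := isOpen_regularLocus hU hF
  have hR : MeasurableSet R := (hopen.preimage (by fun_prop)).measurableSet
  have hRnull : μ.restrict U Rᶜ = 0 := by
    filter_upwards [hreg, ae_restrict_mem hU.measurableSet] with x hJ hx using ⟨hx, hJ⟩
  have : IsFiniteMeasure (μ.restrict U) := ⟨by simpa using hμU.lt_top⟩
  obtain ⟨K, hKR, hK, hKε⟩ := hR.exists_isCompact_sdiff_lt (measure_ne_top (μ.restrict U) R)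
    (ENNReal.ofReal_pos.2 hε).ne'
  obtain ⟨V, W, hV, -, ha₀, hKW, hVW⟩ := generalized_tube_lemma isCompact_singleton hK hopen
    (singleton_prod.subset.trans (image_subset_iff.2 hKR))
  obtain ⟨N, hN, hNV, hNc⟩ := local_compact_nhds (hV.mem_nhds (ha₀ rfl))
  refine ⟨N, hN, hNc, K, hK, ?_, (prod_mono hNV hKW).trans hVW⟩
  calc μ.restrict U Kᶜ ≤ μ.restrict U (R \ K) + μ.restrict U Rᶜ :=
        (measure_mono fun x hx => (em (x ∈ R)).imp (⟨·, hx⟩) id).trans (measure_union_le _ _)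
    _ < ENNReal.ofReal ε := by rwa [hRnull, add_zero]

variable [μ.IsAddHaarMeasure]

lemma exists_nhds_isSmoothUpTo_map (hU : IsOpen U) (hμU : μ U ≠ ⊤)
    (hF : ContDiffOn ℝ (m + 1) F (univ ×ˢ U)) {a₀ : P}
    (hreg : ∀ᵐ x ∂μ.restrict U, fiberJacobian F (a₀, x) ≠ 0) (hε : 0 < ε) :
    ∃ N ∈ 𝓝 a₀, ∃ C > 0, ∀ a ∈ N,
      IsSmoothUpTo μ m ε C ((μ.restrict U).map fun x => F (a, x)) := by
  obtain ⟨N, hN, hNc, K, hK, hKε, hNK⟩ :=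
    exists_isCompact_nhds_prod_subset_regularLocus hU hμU (hF.of_le (by simp)) hreg hε
  obtain ⟨χ, G, hχ, hχ₀, hχ₁, hχK, hG⟩ :=
    exists_hasSmoothPushforward (μ := μ) hU hF (hNc.prod hK) hNK
  obtain ⟨C, hC₀, hC⟩ := exists_forall_norm_iteratedFDeriv_lt hG.contDiff hG.hasCompactSupport
  exact ⟨N, hN, C, hC₀, fun a ha => hG.isSmoothUpTo
    (aemeasurable_comp_prodMk_restrict hU.measurableSet hF.continuousOn a) hχ hχ₀ hχ₁
    hK.measurableSet (fun x hx => hχK _ ⟨ha, hx⟩) hKε hC⟩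

theorem exists_forall_isSmoothUpTo_map {B : Set P} (hB : IsCompact B) (hU : IsOpen U)
    (hμU : μ U ≠ ⊤) (hF : ContDiffOn ℝ (m + 1) F (univ ×ˢ U))
    (hreg : ∀ a ∈ B, ∀ᵐ x ∂μ.restrict U, fiberJacobian F (a, x) ≠ 0) (hε : 0 < ε) :
    ∃ C > 0, ∀ a ∈ B, IsSmoothUpTo μ m ε C ((μ.restrict U).map fun x => F (a, x)) := by
  refine hB.induction_on ⟨1, one_pos, by simp⟩ ?_ ?_ ?_
  · exact fun _ _ hst ⟨C, hC, h⟩ => ⟨C, hC, fun a ha => h a (hst ha)⟩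
  · rintro _ _ ⟨C, hC, h⟩ ⟨C', -, h'⟩
    refine ⟨max C C', lt_max_of_lt_left hC, ?_⟩
    rintro a (ha | ha)
    exacts [(h a ha).mono (le_max_left _ _), (h' a ha).mono (le_max_right _ _)]
  · intro a ha
    obtain ⟨N, hN, h⟩ := exists_nhds_isSmoothUpTo_map hU hμU hF (hreg a ha) hε
    exact ⟨N, mem_nhdsWithin_of_mem_nhds hN, h⟩

end SmoothUpTo

section CurveSums

variable {k : ℕ} {ψ : ℝ → Fin k → ℝ} {a : Fin k → (Fin k → ℝ) →L[ℝ] (Fin k → ℝ)}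
  {x : Fin k → ℝ}

/-- The map `(a, x) ↦ ∑ aᵢ ψ(xᵢ)`, which is `Ψ_a(x)` when the `aᵢ` are given by matrices in `A_k`;
here they are arbitrary linear maps. -/
def curveSum (ψ : ℝ → Fin k → ℝ)
    (z : (Fin k → (Fin k → ℝ) →L[ℝ] (Fin k → ℝ)) × (Fin k → ℝ)) : Fin k → ℝ :=
  ∑ i, z.1 i (ψ (z.2 i))

lemma contDiffAt_curveSum {n : ℕ∞ω} (hψ : ∀ i, ContDiffAt ℝ n ψ (x i)) :
    ContDiffAt ℝ n (curveSum ψ) (a, x) := by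
  refine ContDiffAt.sum fun i _ => ContDiffAt.clm_apply (by fun_prop) ?_
  exact ContDiffAt.comp (a, x) (hψ i) (by fun_prop)

lemma fiberFDeriv_curveSum_apply (hψ : ∀ i, ContDiffAt ℝ 1 ψ (x i)) (h : Fin k → ℝ) :
    fiberFDeriv (curveSum ψ) (a, x) h = ∑ i, h i • a i (deriv ψ (x i)) := by
  have hderiv : HasFDerivAt (fun x => curveSum ψ (a, x))
      (∑ i, a i ∘L .toSpanSingleton ℝ (deriv ψ (x i)) ∘L .proj i) x := by
    refine HasFDerivAt.fun_sum fun i _ => (a i).hasFDerivAt.comp x ?_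
    exact ((hψ i).differentiableAt one_ne_zero).hasDerivAt.hasFDerivAt.comp x
      (hasFDerivAt_apply i x)
  rw [(hasFDerivAt_fiber ((contDiffAt_curveSum hψ).differentiableAt one_ne_zero)).unique hderiv]
  simp

lemma fiberJacobian_curveSum_ne_zero (hψ : ∀ i, ContDiffAt ℝ 1 ψ (x i))
    (hli : LinearIndependent ℝ fun i => a i (deriv ψ (x i))) :
    fiberJacobian (curveSum ψ) (a, x) ≠ 0 := by
  intro hJ
  obtain ⟨h, hker, hne⟩ := (Submodule.ne_bot_iff _).1 (LinearMap.bot_lt_ker_of_det_eq_zero hJ).ne'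
  refine hne (funext (Fintype.linearIndependent_iff.1 hli h ?_))
  rw [← fiberFDeriv_curveSum_apply hψ]
  exact hker

lemma ae_linearIndependent_apply_deriv
    (hψ : ∀ v ≠ 0, ∀ᵐ s ∂volume.restrict (Ioo 0 1), deriv ψ s ⬝ᵥ v ≠ 0)
    (ha : ∀ i, (a i).det ≠ 0) :
    ∀ᵐ x : Fin k → ℝ ∂volume.restrict (univ.pi fun _ => Ioo 0 1),
      LinearIndependent ℝ fun i => a i (deriv ψ (x i)) := by
  rw [volume_pi, Measure.restrict_pi_pi]
  refine ae_linearIndependent_pi (φ := fun i s => a i (deriv ψ s)) (by simp) _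
    (fun i => (a i).measurable.comp (measurable_deriv ψ)) fun i f hf => ?_
  obtain ⟨v, hv⟩ := (dotProductEquiv ℝ (Fin k)).surjective (f ∘ₗ (a i).toLinearMap)
  have hv₀ : v ≠ 0 := by
    rintro rfl
    rw [map_zero, ← LinearMap.zero_comp (a i).toLinearMap] at hv
    exact hf ((LinearMap.cancel_right
      ((a i).toContinuousLinearEquivOfDetNeZero (ha i)).surjective).1 hv).symm
  filter_upwards [hψ v hv₀] with s hs hfs
  exact hs ((dotProduct_comm _ _).trans ((LinearMap.congr_fun hv _).trans hfs))

lemma ae_fiberJacobian_curveSum_ne_zero (hψ : ContDiffOn ℝ 1 ψ (Ioo 0 1))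
    (hnp : ∀ v ≠ 0, ∀ᵐ s ∂volume.restrict (Ioo 0 1), deriv ψ s ⬝ᵥ v ≠ 0)
    (ha : ∀ i, (a i).det ≠ 0) :
    ∀ᵐ x ∂volume.restrict (univ.pi fun _ => Ioo 0 1), fiberJacobian (curveSum ψ) (a, x) ≠ 0 := by
  filter_upwards [ae_linearIndependent_apply_deriv hnp ha,
    ae_restrict_mem (.univ_pi fun _ => measurableSet_Ioo)] with x hli hx
  exact fiberJacobian_curveSum_ne_zero
    (fun i => hψ.contDiffAt (isOpen_Ioo.mem_nhds (hx i (mem_univ i)))) hli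

lemma TotallyNonPlanar.ae_deriv_dotProduct_ne_zero (hψ : TotallyNonPlanar k ψ) {v : Fin k → ℝ}
    (hv : v ≠ 0) : ∀ᵐ s ∂volume.restrict (Ioo 0 1), deriv ψ s ⬝ᵥ v ≠ 0 := by
  rw [ae_restrict_iff' measurableSet_Ioo]
  filter_upwards [measure_eq_zero_iff_ae_notMem.1 (hψ.2 v hv)] with s hs hsI h₀
  refine hs ⟨Ioo_subset_Icc_self hsI, ?_⟩
  rwa [curveDeriv, derivWithin_of_mem_nhds (Icc_mem_nhds hsI.1 hsI.2)]

lemma restrict_pi_Icc_eq_restrict_pi_Ioo :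
    volume.restrict {x : Fin k → ℝ | ∀ i, x i ∈ Icc (0 : ℝ) 1} =
      volume.restrict (univ.pi fun _ => Ioo 0 1) := by
  refine Measure.restrict_congr_set (.trans (.of_eq ?_) Measure.univ_pi_Ioo_ae_eq_Icc.symm)
  rw [← pi_univ_Icc]
  ext x
  exact mem_univ_pi.symm

end CurveSums

theorem stmt10_general (k m : ℕ) (ψ : ℝ → Fin k → ℝ) (hψ : ContDiffOn ℝ (m + 1 : ℕ) ψ (Ioo 0 1))
    (hnp : ∀ v ≠ 0, ∀ᵐ s ∂volume.restrict (Ioo 0 1), deriv ψ s ⬝ᵥ v ≠ 0)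
    (B : Set (Fin k → (Fin k → ℝ) →L[ℝ] (Fin k → ℝ))) (hB : IsCompact B)
    (hdet : ∀ a ∈ B, ∀ i, (a i).det ≠ 0) (ε : ℝ) (hε : 0 < ε) :
    ∃ C > 0, ∀ a ∈ B, IsSmoothUpTo volume m ε C
      (Measure.map (fun x => ∑ i, a i (ψ (x i)))
        (volume.restrict {x : Fin k → ℝ | ∀ i, x i ∈ Icc 0 1})) := by
  have hF : ContDiffOn ℝ (m + 1) (curveSum ψ) (univ ×ˢ univ.pi fun _ => Ioo 0 1) :=
    fun z hz => (contDiffAt_curveSum fun i =>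
      hψ.contDiffAt (isOpen_Ioo.mem_nhds (hz.2 i (mem_univ i)))).contDiffWithinAt
  rw [restrict_pi_Icc_eq_restrict_pi_Ioo]
  exact exists_forall_isSmoothUpTo_map hB (isOpen_set_pi finite_univ fun _ _ => isOpen_Ioo)
    (by simp [volume_pi_pi]) hF
    (fun a ha => ae_fiberJacobian_curveSum_ne_zero (hψ.of_le (by simp)) hnp (hdet a ha)) hε

/-- The endomorphism of `ℝ^k` given by a matrix in `A_k`, to which `stmt10_general` applies. -/
noncomputable def Ak.toCLM {k : ℕ} (a : Ak k) : (Fin k → ℝ) →L[ℝ] (Fin k → ℝ) :=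
  (Matrix.toLin'.trans LinearMap.toContinuousLinearMap) a.val

lemma Ak.continuous_toCLM {k : ℕ} : Continuous (Ak.toCLM (k := k)) := by
  let L : Matrix (Fin k) (Fin k) ℝ →ₗ[ℝ] (Fin k → ℝ) →L[ℝ] (Fin k → ℝ) :=
    (Matrix.toLin'.trans LinearMap.toContinuousLinearMap).toLinearMap
  exact L.continuous_of_finiteDimensional.comp continuous_subtype_val

lemma Ak.det_toCLM {k : ℕ} (a : Ak k) : a.toCLM.det = 1 :=
  (LinearMap.det_toLin' a.val).trans a.2.2

/-- For `ψ` totally non-planar and `C^{m+1}` and `B ⊆ A_k^k` compact,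
for every `ε > 0` there is a constant `C > 0` such that the pushforward `(Ψ_a)_*λ_{[0,1]^k}`
decomposes as a measure with a nonnegative `C^m` density of `C^m`-norm less than `C`,
plus an error of total mass less than `ε`, uniformly in `a ∈ B`. -/
theorem stmt10 (k m : ℕ) (ψ : ℝ → (Fin k → ℝ)) (hψ : TotallyNonPlanar k ψ)
    (hsmooth : ContDiffOn ℝ (m + 1 : ℕ) ψ (Set.Icc 0 1))
    (B : Set (Fin k → Ak k)) (hB : IsCompact B) (ε : ℝ) (hε : 0 < ε) :
    ∃ C > (0:ℝ), ∀ a ∈ B, ∃ τ₁ τ₂ : Measure (Fin k → ℝ),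
      Measure.map (PsiMap k ψ a)
          (volume.restrict {x : Fin k → ℝ | ∀ i, x i ∈ Set.Icc (0:ℝ) 1}) = τ₁ + τ₂ ∧
      τ₂ Set.univ < ENNReal.ofReal ε ∧
      (∃ g : (Fin k → ℝ) → ℝ, ContDiff ℝ (m : ℕ) g ∧ (∀ x, 0 ≤ g x) ∧
        τ₁ = volume.withDensity (fun x => ENNReal.ofReal (g x)) ∧
        ∀ i ≤ m, ∀ x, ‖iteratedFDeriv ℝ i g x‖ < C) := by
  obtain ⟨C, hC, h⟩ := stmt10_general k m ψ (hsmooth.mono Ioo_subset_Icc_self)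
    (fun v hv => hψ.ae_deriv_dotProduct_ne_zero hv) _
    (hB.image (continuous_pi fun i => Ak.continuous_toCLM.comp (continuous_apply i)))
    (forall_mem_image.2 fun a _ i => (a i).det_toCLM.trans_ne one_ne_zero) ε hε
  exact ⟨C, hC, fun a ha => h _ (mem_image_of_mem _ ha)⟩
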